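/- Partition of a cell into well-separated clusters: let G = (g₁,…,g_{2^d}) ∈ ℝ^{d×2^d} with columns indexed by 𝒵 = {z₁,…,z_{2^d}}, and let C > 0. Then there exists a partition 𝒵 = 𝒵₁ ∪̇ … ∪̇ 𝒵ₙ such that diam{G,𝒵ᵢ} := max{|g_s − g_t| : z_s, z_t ∈ 𝒵ᵢ} ≤ (#𝒵ᵢ/2^d)² C for every i, and d(G;𝒵ᵢ,𝒵ⱼ) := min{|g_s − g_t| : z_s ∈ 𝒵ᵢ, z_t ∈ 𝒵ⱼ} > 2^{−2d} C for all i ≠ j. -/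

import Mathlib

open scoped BigOperators

noncomputable section

namespace Cleavage

/-- Euclidean norm on `ℝ^d`. -/
def eunorm {d : ℕ} (v : Fin d → ℝ) : ℝ := Real.sqrt (∑ i, v i ^ 2)

/-!
The clusters are the connected components of the graph joining two points whenever they are at
distance at most `ε = 2^{-2d} C`. Distinct components are then more than `ε` apart, and two points
of a component with `k` points are joined inside it by a path of at most `k - 1` steps, so their
distance is at most `(k - 1) ε ≤ k² ε = (k / 2^d)² C`.
-/

theorem eunorm_sub_eq_dist {d : ℕ} (v w : Fin d → ℝ) :
    eunorm (fun i => v i - w i) = dist (WithLp.toLp 2 v) (WithLp.toLp 2 w) := by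
  simp only [eunorm, EuclideanSpace.dist_eq, Real.dist_eq, sq_abs]

section Metric

variable {V X : Type*} [PseudoMetricSpace X] {G : SimpleGraph V} {f : V → X} {ε : ℝ}

theorem dist_le_walk_length_mul (hf : ∀ s t, G.Adj s t → dist (f s) (f t) ≤ ε) {s t : V}
    (p : G.Walk s t) : dist (f s) (f t) ≤ p.length * ε := by
  induction p with
  | nil => simp
  | @cons s u t hsu p ih =>
    calc dist (f s) (f t) ≤ dist (f s) (f u) + dist (f u) (f t) := dist_triangle _ _ _
      _ ≤ ε + p.length * ε := add_le_add (hf s u hsu) ih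
      _ = (p.cons hsu).length * ε := by rw [SimpleGraph.Walk.length_cons]; push_cast; ring

theorem dist_le_of_connected [Fintype V] (hG : G.Connected) (hε : 0 ≤ ε)
    (hf : ∀ s t, G.Adj s t → dist (f s) (f t) ≤ ε) (s t : V) :
    dist (f s) (f t) ≤ (Fintype.card V - 1) * ε := by
  obtain ⟨p, hp⟩ := hG.exists_isPath s t
  have hlength : (p.length : ℝ) ≤ Fintype.card V - 1 :=
    le_sub_iff_add_le.mpr (mod_cast hp.length_lt)
  exact (dist_le_walk_length_mul hf p).trans (by gcongr)

/-- The graph joining distinct indices whose points are at distance at most `ε`; its connected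
components are the single-linkage clusters of the family `f` at scale `ε`. -/
def proximityGraph (f : V → X) (ε : ℝ) : SimpleGraph V where
  Adj s t := s ≠ t ∧ dist (f s) (f t) ≤ ε
  symm := ⟨fun s t h => ⟨h.1.symm, dist_comm (f s) (f t) ▸ h.2⟩⟩
  loopless := ⟨fun _ h => h.1 rfl⟩

theorem dist_le_of_mem_component (hε : 0 ≤ ε)
    (c : (proximityGraph f ε).ConnectedComponent) [Fintype c.supp] {s t : V}
    (hs : s ∈ c.supp) (ht : t ∈ c.supp) :
    dist (f s) (f t) ≤ (c.supp.toFinset.card - 1) * ε := by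
  rw [Set.toFinset_card]
  exact dist_le_of_connected (f := fun v : c.supp => f v) c.connected_toSimpleGraph hε
    (fun _ _ hadj => hadj.2) ⟨s, hs⟩ ⟨t, ht⟩

theorem lt_dist_of_component_ne {c c' : (proximityGraph f ε).ConnectedComponent} (hne : c ≠ c')
    {s t : V} (hs : s ∈ c.supp) (ht : t ∈ c'.supp) : ε < dist (f s) (f t) := by
  by_contra! hclose
  have hst : s ≠ t := by
    rintro rfl
    exact hne (hs.symm.trans ht)
  have hadj : (proximityGraph f ε).Adj s t := ⟨hst, hclose⟩
  exact hne (hs.symm.trans ((SimpleGraph.ConnectedComponent.sound hadj.reachable).trans ht))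

end Metric

theorem cell_partition_into_separated_clusters_general {V X : Type*} [Fintype V] [DecidableEq V]
    [PseudoMetricSpace X] (f : V → X) {ε : ℝ} (hε : 0 ≤ ε) :
    ∃ (n : ℕ) (P : Fin n → Finset V),
      (∀ i, (P i).Nonempty) ∧
      (∀ i j, i ≠ j → Disjoint (P i) (P j)) ∧
      (Finset.univ.biUnion P = Finset.univ) ∧
      (∀ i, ∀ s ∈ P i, ∀ t ∈ P i, dist (f s) (f t) ≤ ((P i).card - 1) * ε) ∧
      (∀ i j, i ≠ j → ∀ s ∈ P i, ∀ t ∈ P j, ε < dist (f s) (f t)) := by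
  classical
  obtain ⟨n, ⟨e⟩⟩ := Finite.exists_equiv_fin (proximityGraph f ε).ConnectedComponent
  refine ⟨n, fun i => (e.symm i).supp.toFinset, fun i => ?_, fun i j hij => ?_, ?_,
    fun i s hs t ht => ?_, fun i j hij s hs t ht => ?_⟩
  · exact Set.toFinset_nonempty.mpr (e.symm i).nonempty_supp
  · exact Set.disjoint_toFinset.mpr
      (SimpleGraph.pairwise_disjoint_supp_connectedComponent _ (e.symm.injective.ne hij))
  · ext s
    simp [Equiv.eq_symm_apply]
  · exact dist_le_of_mem_component hε _ (Set.mem_toFinset.mp hs) (Set.mem_toFinset.mp ht)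
  · exact lt_dist_of_component_ne (e.symm.injective.ne hij)
      (Set.mem_toFinset.mp hs) (Set.mem_toFinset.mp ht)

theorem sub_one_mul_le_sq_div_mul {C : ℝ} (hC : 0 ≤ C) (d : ℕ) (k : ℝ) :
    (k - 1) * (C / 2 ^ (2 * d)) ≤ k ^ 2 / (2 ^ d) ^ 2 * C :=
  calc (k - 1) * (C / 2 ^ (2 * d)) ≤ k ^ 2 * (C / 2 ^ (2 * d)) := by
        gcongr
        nlinarith
    _ = k ^ 2 / (2 ^ d) ^ 2 * C := by rw [mul_comm 2 d, pow_mul]; ring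

/-- Partition of the `2^d` points of a cell into clusters that are
internally of diameter at most `(#𝒵ᵢ/2^d)² C` and mutually separated by more than `2^{-2d} C`. -/
theorem cell_partition_into_separated_clusters
    (d : ℕ) (hd : 1 ≤ d) (g : Fin (2 ^ d) → Fin d → ℝ) (C : ℝ) (hC : 0 < C) :
    ∃ (n : ℕ) (P : Fin n → Finset (Fin (2 ^ d))),
      (∀ i, (P i).Nonempty) ∧
      (∀ i j, i ≠ j → Disjoint (P i) (P j)) ∧
      (Finset.univ.biUnion P = Finset.univ) ∧
      (∀ i, ∀ s ∈ P i, ∀ t ∈ P i,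
        eunorm (fun jj => g s jj - g t jj) ≤ ((P i).card : ℝ) ^ 2 / ((2 : ℝ) ^ d) ^ 2 * C) ∧
      (∀ i j, i ≠ j → ∀ s ∈ P i, ∀ t ∈ P j,
        C / (2 : ℝ) ^ (2 * d) < eunorm (fun jj => g s jj - g t jj)) := by
  simp only [eunorm_sub_eq_dist]
  obtain ⟨n, P, hne, hdisj, hcover, hdiam, hsep⟩ := cell_partition_into_separated_clusters_general
    (fun s => WithLp.toLp 2 (g s)) (ε := C / 2 ^ (2 * d)) (by positivity)
  exact ⟨n, P, hne, hdisj, hcover, fun i s hs t ht =>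
    (hdiam i s hs t ht).trans (sub_one_mul_le_sq_div_mul hC.le d _), hsep⟩

end Cleavage
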